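/- arXiv:2501.18231 — 3 statements merged into one kernel-verified Lean document; each statement's English description precedes it below -/
import Mathlib

section
/- Let (W, A) be a cut-free *-Gentzen frame. Then the dual algebra W⁺ = (W⁺, ∩, ∪_γ, ∘_γ, \, /, *_γ, 0^◁, γ({ε})) is a *-continuous action lattice. -/
/-! The operator `γ` is a closure operator, so closedness, the lattice laws and least upper bounds
are formal. The one place where nuclearity of `N` enters is `closed_sld` / `closed_srd`: if `Y` is
closed, then so are `X \ Y` and `Y / X`, because `x∘y N z` is a condition `y N x⫽z` on `y`.
Consequently an inclusion `{x∘y | x ∈ γ(X), y ∈ γ(Y)} ⊆ Z` with `Z` closed may be checked on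
`x ∈ X` and `y ∈ Y` only (`cmul_gam_left`, `cmul_gam_right`), which gives associativity, the unit
laws and residuation.

For the star, `γ(X*) ⊆ Y / Y` reduces to `X* ⊆ Y / Y`, and `Y / Y` is a submonoid containing `X`
whenever `X ∘_γ Y ⊆ Y`; the other induction law is symmetric. Every product of `n` elements of `X`
lies in the `n`-th power of `X`, which gives `*`-continuity. The rule (0L) makes `0^◁` the
least closed set. -/

/-! The dual algebra of a cut-free *-Gentzen frame is a *-continuous action lattice. -/

namespace ResFrames

variable {W W' A : Type*}

def polR (N : W → W' → Prop) (X : Set W) : Set W' := {z | ∀ x ∈ X, N x z}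
def polL (N : W → W' → Prop) (Y : Set W') : Set W := {x | ∀ z ∈ Y, N x z}
def gam (N : W → W' → Prop) (X : Set W) : Set W := polL N (polR N X)
def Closed (N : W → W' → Prop) (X : Set W) : Prop := gam N X = X

structure IsResFrame [Monoid W] (N : W → W' → Prop)
    (lres : W → W' → W') (rres : W' → W → W') : Prop where
  nuclear_l : ∀ (x y : W) (z : W'), N (x * y) z ↔ N y (lres x z)
  nuclear_r : ∀ (x y : W) (z : W'), N (x * y) z ↔ N x (rres z y)

/-- `X ∘_γ Y  = γ({x∘y | x ∈ X, y ∈ Y})`. -/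
def cmul [Monoid W] (N : W → W' → Prop) (X Y : Set W) : Set W :=
  gam N (Set.image2 (· * ·) X Y)

/-- `X ∪_γ Y = γ(X ∪ Y)`. -/
def cjoin (N : W → W' → Prop) (X Y : Set W) : Set W := gam N (X ∪ Y)

/-- `X \ Y = {w | ∀ x ∈ X, x∘w ∈ Y}`. -/
def sld [Monoid W] (X Y : Set W) : Set W := {w | ∀ x ∈ X, x * w ∈ Y}

/-- `Y / X = {w | ∀ x ∈ X, w∘x ∈ Y}`. -/
def srd [Monoid W] (Y X : Set W) : Set W := {w | ∀ x ∈ X, w * x ∈ Y}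

/-- The unit `γ({ε})` of the dual algebra. -/
def cone [Monoid W] (N : W → W' → Prop) : Set W := gam N {1}

/-- `X*`: the set of all finite products of elements of `X`. -/
def starSet [Monoid W] (X : Set W) : Set W := (Submonoid.closure X : Set W)

/-- `X^{*γ} = γ(X*)`. -/
def cstar [Monoid W] (N : W → W' → Prop) (X : Set W) : Set W := gam N (starSet X)

/-- `Xⁿ`: the `n`-fold power of `X` with respect to `∘_γ`, with `X⁰ = γ({ε})`. -/
def gpow [Monoid W] (N : W → W' → Prop) (X : Set W) : ℕ → Set W
  | 0 => cone N
  | n + 1 => cmul N (gpow N X n) X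

/-- The dual algebra `(W⁺, ∩, ∪_γ, ∘_γ, \, /, γ({ε}))` is a residuated lattice:
all operations map closed sets to closed sets, `∩`/`∪_γ` are binary meet/join
with respect to `⊆`, `∘_γ` is a monoid operation with unit `γ({ε})`, and
`\`, `/` are its residuals. -/
def DualResLat [Monoid W] (N : W → W' → Prop) : Prop :=
  (∀ X Y : Set W, Closed N X → Closed N Y → Closed N (X ∩ Y)) ∧
  (∀ X Y : Set W, Closed N (cjoin N X Y)) ∧
  (∀ X Y : Set W, Closed N (cmul N X Y)) ∧
  (∀ X Y : Set W, Closed N Y → Closed N (sld X Y)) ∧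
  (∀ X Y : Set W, Closed N Y → Closed N (srd Y X)) ∧
  Closed N (cone N) ∧
  (∀ X Y : Set W, X ∩ Y ⊆ X) ∧
  (∀ X Y : Set W, X ∩ Y ⊆ Y) ∧
  (∀ X Y Z : Set W, Z ⊆ X → Z ⊆ Y → Z ⊆ X ∩ Y) ∧
  (∀ X Y : Set W, X ⊆ cjoin N X Y) ∧
  (∀ X Y : Set W, Y ⊆ cjoin N X Y) ∧
  (∀ X Y Z : Set W, Closed N Z → X ⊆ Z → Y ⊆ Z → cjoin N X Y ⊆ Z) ∧
  (∀ X Y Z : Set W, Closed N X → Closed N Y → Closed N Z →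
    cmul N (cmul N X Y) Z = cmul N X (cmul N Y Z)) ∧
  (∀ X : Set W, Closed N X → cmul N (cone N) X = X) ∧
  (∀ X : Set W, Closed N X → cmul N X (cone N) = X) ∧
  (∀ X Y Z : Set W, Closed N X → Closed N Y → Closed N Z →
    (cmul N X Y ⊆ Z ↔ Y ⊆ sld X Z)) ∧
  (∀ X Y Z : Set W, Closed N X → Closed N Y → Closed N Z →
    (cmul N X Y ⊆ Z ↔ X ⊆ srd Z Y))

/-- Operations of an algebra in the language `{∧, ∨, ·, \, /, *, 1, 0}`.
`ld a b` denotes `a \ b` and `rd a b` denotes `a / b`. -/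
structure AOps (A : Type*) where
  meet : A → A → A
  join : A → A → A
  mul : A → A → A
  ld : A → A → A
  rd : A → A → A
  star : A → A
  one : A
  zero : A

/-- `(W, A)` is a cut-free `*`-Gentzen frame: a residuated frame with the
algebra `A` injected into `W` (via `i`) and into `W'` (via `i'`), generating
the monoid `W`, such that `N` satisfies all the (cut-free) Gentzen rules
together with the rules (0L), (*L), (*R₀), (*R₁). -/
structure IsStarGentzenCF [Monoid W] (N : W → W' → Prop)
    (lres : W → W' → W') (rres : W' → W → W')
    (ops : AOps A) (i : A → W) (i' : A → W') extends
    IsResFrame N lres rres : Prop where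
  i_inj : Function.Injective i
  i'_inj : Function.Injective i'
  gen : Submonoid.closure (Set.range i) = ⊤
  id_rule : ∀ a : A, N (i a) (i' a)
  ld_L : ∀ (x : W) (z : W') (a b : A),
    N x (i' a) → N (i b) z → N (i (ops.ld a b)) (lres x z)
  ld_R : ∀ (x : W) (a b : A), N x (lres (i a) (i' b)) → N x (i' (ops.ld a b))
  rd_L : ∀ (x : W) (z : W') (a b : A),
    N x (i' a) → N (i b) z → N (i (ops.rd b a)) (rres z x)
  rd_R : ∀ (x : W) (a b : A), N x (rres (i' b) (i a)) → N x (i' (ops.rd b a))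
  mul_L : ∀ (z : W') (a b : A), N (i a * i b) z → N (i (ops.mul a b)) z
  mul_R : ∀ (x y : W) (a b : A),
    N x (i' a) → N y (i' b) → N (x * y) (i' (ops.mul a b))
  meet_L₀ : ∀ (z : W') (a₀ a₁ : A), N (i a₀) z → N (i (ops.meet a₀ a₁)) z
  meet_L₁ : ∀ (z : W') (a₀ a₁ : A), N (i a₁) z → N (i (ops.meet a₀ a₁)) z
  meet_R : ∀ (x : W) (a b : A),
    N x (i' a) → N x (i' b) → N x (i' (ops.meet a b))
  join_L : ∀ (z : W') (a b : A),
    N (i a) z → N (i b) z → N (i (ops.join a b)) z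
  join_R₀ : ∀ (x : W) (a₀ a₁ : A), N x (i' a₀) → N x (i' (ops.join a₀ a₁))
  join_R₁ : ∀ (x : W) (a₀ a₁ : A), N x (i' a₁) → N x (i' (ops.join a₀ a₁))
  one_L : ∀ z : W', N 1 z → N (i ops.one) z
  one_R : N 1 (i' ops.one)
  zero_L : ∀ (x : W) (z : W'), N x (i' ops.zero) → N x z
  star_L : ∀ (z : W') (a : A), (∀ n : ℕ, N (i a ^ n) z) → N (i (ops.star a)) z
  star_R₀ : ∀ a : A, N 1 (i' (ops.star a))
  star_R₁ : ∀ (x y : W) (a : A),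
    N x (i' a) → N y (i' (ops.star a)) → N (x * y) (i' (ops.star a))

/-- A `*`-Gentzen frame: additionally satisfies (Cut). -/
structure IsStarGentzen [Monoid W] (N : W → W' → Prop)
    (lres : W → W' → W') (rres : W' → W → W')
    (ops : AOps A) (i : A → W) (i' : A → W') extends
    IsStarGentzenCF N lres rres ops i i' : Prop where
  cut : ∀ (x : W) (z : W') (a : A), N x (i' a) → N (i a) z → N x z

section Aux

variable {N : W → W' → Prop} {X Y Z : Set W}

lemma subset_gam : X ⊆ gam N X := fun x hx _ hz => hz x hx

lemma gam_subset (hZ : Closed N Z) (h : X ⊆ Z) : gam N X ⊆ Z := by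
  intro x hx
  rw [← hZ]
  exact fun z hz => hx z fun y hy => hz y (h hy)

lemma gam_subset_iff (hZ : Closed N Z) : gam N X ⊆ Z ↔ X ⊆ Z :=
  ⟨subset_gam.trans, gam_subset hZ⟩

lemma closed_polL (V : Set W') : Closed N (polL N V) :=
  subset_antisymm (fun _ hx z hz => hx z fun _ hy => hy z hz) subset_gam

lemma closed_gam (X : Set W) : Closed N (gam N X) := closed_polL _

lemma closed_inter (hX : Closed N X) (hY : Closed N Y) : Closed N (X ∩ Y) :=
  subset_antisymm
    (Set.subset_inter (gam_subset hX Set.inter_subset_left)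
      (gam_subset hY Set.inter_subset_right))
    subset_gam

variable [Monoid W] {lres : W → W' → W'} {rres : W' → W → W'}

lemma closed_sld (h : IsResFrame N lres rres) (X : Set W) (hY : Closed N Y) :
    Closed N (sld X Y) := by
  refine subset_antisymm (fun y hy x hx => ?_) subset_gam
  rw [← hY]
  exact fun z hz => (h.nuclear_l x y z).2 <|
    hy _ fun w hw => (h.nuclear_l x w z).1 (hz _ (hw x hx))

lemma closed_srd (h : IsResFrame N lres rres) (X : Set W) (hY : Closed N Y) :
    Closed N (srd Y X) := by
  refine subset_antisymm (fun y hy x hx => ?_) subset_gam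
  rw [← hY]
  exact fun z hz => (h.nuclear_r y x z).2 <|
    hy _ fun w hw => (h.nuclear_r w x z).1 (hz _ (hw x hx))

lemma cmul_subset_iff (hZ : Closed N Z) :
    cmul N X Y ⊆ Z ↔ ∀ x ∈ X, ∀ y ∈ Y, x * y ∈ Z := by
  rw [cmul, gam_subset_iff hZ, Set.image2_subset_iff]

lemma closed_cmul (X Y : Set W) : Closed N (cmul N X Y) := closed_gam _

lemma mul_mem_cmul {x y : W} (hx : x ∈ X) (hy : y ∈ Y) : x * y ∈ cmul N X Y :=
  subset_gam (Set.mem_image2_of_mem hx hy)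

lemma cmul_subset_iff_sld (hZ : Closed N Z) : cmul N X Y ⊆ Z ↔ Y ⊆ sld X Z := by
  rw [cmul_subset_iff hZ]
  exact ⟨fun h y hy x hx => h x hx y hy, fun h x hx y hy => h hy x hx⟩

lemma cmul_subset_iff_srd (hZ : Closed N Z) : cmul N X Y ⊆ Z ↔ X ⊆ srd Z Y :=
  cmul_subset_iff hZ

/-- By residuation, since `γ(X)` lies in the closed set `(X ∘_γ Y) / Y` as soon as `X` does. -/
lemma cmul_gam_left (h : IsResFrame N lres rres) (X Y : Set W) :
    cmul N (gam N X) Y = cmul N X Y := by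
  refine subset_antisymm ?_ ?_
  · rw [cmul_subset_iff_srd (closed_cmul X Y),
      gam_subset_iff (closed_srd h _ (closed_cmul X Y))]
    exact fun x hx y hy => mul_mem_cmul hx hy
  · exact (cmul_subset_iff (closed_gam _)).2 fun x hx y hy => mul_mem_cmul (subset_gam hx) hy

lemma cmul_gam_right (h : IsResFrame N lres rres) (X Y : Set W) :
    cmul N X (gam N Y) = cmul N X Y := by
  refine subset_antisymm ?_ ?_
  · rw [cmul_subset_iff_sld (closed_cmul X Y),
      gam_subset_iff (closed_sld h _ (closed_cmul X Y))]
    exact fun y hy x hx => mul_mem_cmul hx hy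
  · exact (cmul_subset_iff (closed_gam _)).2 fun x hx y hy => mul_mem_cmul hx (subset_gam hy)

lemma cmul_assoc' (h : IsResFrame N lres rres) (X Y Z : Set W) :
    cmul N (cmul N X Y) Z = cmul N X (cmul N Y Z) := by
  conv_lhs => enter [2]; rw [cmul]
  conv_rhs => enter [3]; rw [cmul]
  rw [cmul_gam_left h, cmul_gam_right h, cmul, cmul, Set.image2_assoc mul_assoc]

lemma cone_cmul (h : IsResFrame N lres rres) (hX : Closed N X) : cmul N (cone N) X = X := by
  rw [cone, cmul_gam_left h, cmul, Set.image2_singleton_left]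
  simpa using (show gam N X = X from hX)

lemma cmul_cone (h : IsResFrame N lres rres) (hX : Closed N X) : cmul N X (cone N) = X := by
  rw [cone, cmul_gam_right h, cmul, Set.image2_singleton_right]
  simpa using (show gam N X = X from hX)

lemma dualResLat (h : IsResFrame N lres rres) : DualResLat N :=
  ⟨fun _ _ => closed_inter, fun _ _ => closed_gam _, fun _ _ => closed_gam _,
    fun X _ => closed_sld h X, fun X _ => closed_srd h X, closed_gam _,
    fun _ _ => Set.inter_subset_left, fun _ _ => Set.inter_subset_right,
    fun _ _ _ => Set.subset_inter,
    fun _ _ => Set.subset_union_left.trans subset_gam,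
    fun _ _ => Set.subset_union_right.trans subset_gam,
    fun _ _ _ hZ hX hY => gam_subset hZ (Set.union_subset hX hY),
    fun X Y Z _ _ _ => cmul_assoc' h X Y Z,
    fun _ => cone_cmul h, fun _ => cmul_cone h,
    fun _ _ _ _ _ hZ => cmul_subset_iff_sld hZ,
    fun _ _ _ _ _ hZ => cmul_subset_iff_srd hZ⟩

lemma one_mem_starSet : (1 : W) ∈ starSet X := (Submonoid.closure X).one_mem

lemma cone_subset_cstar : cone N ⊆ cstar N X :=
  gam_subset (closed_gam _) (Set.singleton_subset_iff.2 (subset_gam one_mem_starSet))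

lemma cmul_cstar_subset (h : IsResFrame N lres rres) : cmul N X (cstar N X) ⊆ cstar N X := by
  rw [cstar, cmul_gam_right h, cmul_subset_iff (closed_gam _)]
  exact fun x hx y hy =>
    subset_gam ((Submonoid.closure X).mul_mem (Submonoid.subset_closure hx) hy)

lemma cstar_cmul_subset (h : IsResFrame N lres rres) : cmul N (cstar N X) X ⊆ cstar N X := by
  rw [cstar, cmul_gam_left h, cmul_subset_iff (closed_gam _)]
  exact fun x hx y hy =>
    subset_gam ((Submonoid.closure X).mul_mem hx (Submonoid.subset_closure hy))

lemma cstar_cmul_subset_of (h : IsResFrame N lres rres) (hY : Closed N Y)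
    (hXY : cmul N X Y ⊆ Y) : cmul N (cstar N X) Y ⊆ Y := by
  rw [cmul_subset_iff hY] at hXY
  rw [cstar, cmul_gam_left h, cmul_subset_iff hY]
  intro x hx
  induction hx using Submonoid.closure_induction with
  | mem x hx => exact hXY x hx
  | one => simp
  | mul a b _ _ ha hb =>
    intro y hy
    rw [mul_assoc]
    exact ha _ (hb _ hy)

lemma cmul_cstar_subset_of (h : IsResFrame N lres rres) (hY : Closed N Y)
    (hYX : cmul N Y X ⊆ Y) : cmul N Y (cstar N X) ⊆ Y := by
  rw [cmul_subset_iff hY] at hYX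
  rw [cstar, cmul_gam_right h, cmul_subset_iff hY]
  intro y hy x hx
  induction hx using Submonoid.closure_induction generalizing y with
  | mem x hx => exact hYX y hy x hx
  | one => simpa using hy
  | mul a b _ _ ha hb =>
    rw [← mul_assoc]
    exact hb _ (ha _ hy)

lemma gpow_subset_cstar (h : IsResFrame N lres rres) (n : ℕ) : gpow N X n ⊆ cstar N X := by
  induction n with
  | zero => exact cone_subset_cstar
  | succ n ih =>
    refine (cmul_subset_iff (closed_gam _)).2 fun x hx y hy => ?_
    exact cstar_cmul_subset h (mul_mem_cmul (ih hx) hy)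

/-- A product of `n` elements of `X` lies in the `n`-th `∘_γ`-power of `X`. -/
lemma exists_mem_gpow {x : W} (hx : x ∈ starSet X) : ∃ n, x ∈ gpow N X n := by
  induction hx using Submonoid.closure_induction_right with
  | one => exact ⟨0, subset_gam rfl⟩
  | mul_right x _ y hy ih =>
    obtain ⟨n, hn⟩ := ih
    exact ⟨n + 1, mul_mem_cmul hn hy⟩

lemma cstar_subset_of_gpow (hY : Closed N Y) (h : ∀ n : ℕ, gpow N X n ⊆ Y) :
    cstar N X ⊆ Y :=
  gam_subset hY fun _ hx => (exists_mem_gpow hx).elim fun n hn => h n hn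

end Aux

/-- if `(W, A)` is a cut-free `*`-Gentzen frame, then the dual
algebra `W⁺ = (W⁺, ∩, ∪_γ, ∘_γ, \, /, *_γ, 0^◁, γ({ε}))` is a `*`-continuous
action lattice: it is a residuated lattice, `0^◁` is its least element,
`*_γ` satisfies the action-lattice axioms, and for every closed `X`,
`X^{*γ}` is the supremum of the powers `Xⁿ`. -/
theorem statement2 [Monoid W] (N : W → W' → Prop)
    (lres : W → W' → W') (rres : W' → W → W')
    (ops : AOps A) (i : A → W) (i' : A → W')
    (hG : IsStarGentzenCF N lres rres ops i i') :
    DualResLat N ∧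
    -- `0^◁` is a closed set and the least element of `W⁺`
    Closed N (polL N {i' ops.zero}) ∧
    (∀ X : Set W, Closed N X → polL N {i' ops.zero} ⊆ X) ∧
    -- `*_γ` maps closed sets to closed sets and satisfies the star axioms
    (∀ X : Set W, Closed N (cstar N X)) ∧
    (∀ X : Set W, Closed N X →
      cjoin N (cone N) (cmul N X (cstar N X)) ⊆ cstar N X) ∧
    (∀ X Y : Set W, Closed N X → Closed N Y →
      cmul N X Y ⊆ Y → cmul N (cstar N X) Y ⊆ Y) ∧
    (∀ X Y : Set W, Closed N X → Closed N Y →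
      cmul N Y X ⊆ Y → cmul N Y (cstar N X) ⊆ Y) ∧
    -- `*`-continuity: `X^{*γ}` is the supremum of the powers of `X`
    (∀ X : Set W, Closed N X → ∀ n : ℕ, gpow N X n ⊆ cstar N X) ∧
    (∀ X Y : Set W, Closed N X → Closed N Y →
      (∀ n : ℕ, gpow N X n ⊆ Y) → cstar N X ⊆ Y) := by
  have h : IsResFrame N lres rres := hG.toIsResFrame
  refine ⟨dualResLat h, closed_polL _, fun X hX x hx => ?_, fun _ => closed_gam _,
    fun X _ => gam_subset (closed_gam _) (Set.union_subset cone_subset_cstar (cmul_cstar_subset h)),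
    fun _ _ _ hY => cstar_cmul_subset_of h hY, fun _ _ _ hY => cmul_cstar_subset_of h hY,
    fun _ _ => gpow_subset_cstar h, fun _ _ _ hY => cstar_subset_of_gpow hY⟩
  rw [← hX]
  exact fun z _ => hG.zero_L x z (hx _ rfl)

end ResFrames
end

section
/- Let (W, A) be a cut-free *-Gentzen frame. Then the map F : A → ℘(W⁺) defined by F(a) := {X ∈ W⁺ | a ∈ X ⊆ a^◁} is a quasimorphism from A to the dual algebra W⁺: γ({ε}) ∈ F(1), 0^◁ ∈ F(0), F(a)^{*_γ} ⊆ F(a*), and F(a) •_{W⁺} F(b) ⊆ F(a • b) for each operation • ∈ {∧, ∨, ·, \, /} (where the operation on W⁺ is the corresponding dual-algebra operation ∩, ∪_γ, ∘_γ, \, /, applied elementwise to the two sets of closed sets). -/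
/-!
In each case three facts about a set of the form `c(X, Y)` are needed: it is closed, it contains the
image of the compound element, and it lies below the polar of that element.

The sets `γ(S)` and `Y^◁` are closed because polarity is a Galois connection; a residual `X \ Y`
is closed as soon as `Y` is, by nuclearity. Membership in a closed set `X` is tested against `X^▷`
(`mem_of_closed`), so it comes from the left rule of the connective. To show `γ(S) ⊆ c^◁` it is
enough to show `S ⊆ c^◁` (`gam_subset`), and this comes from the right rule. For the residuals
the upper bound uses `a ∈ X`: if `w ∈ X \ Y` then `a ∘ w ∈ Y ⊆ b^◁`. For `*`, the left rule
needs `aⁿ ∈ X*` for every `n`, and the right rules give `X* ⊆ (a*)^◁` by induction on products.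
-/

/-! The quasimorphism lemma for cut-free *-Gentzen frames. -/

namespace ResFrames

variable {W W' A : Type*}

variable [Monoid W]

/-- `F(a) = {X ∈ W⁺ | a ∈ X ⊆ a^◁}`. -/
def Fq (N : W → W' → Prop) (i : A → W) (i' : A → W') (a : A) : Set (Set W) :=
  {X | Closed N X ∧ i a ∈ X ∧ X ⊆ polL N {i' a}}

theorem polL_closed (N : W → W' → Prop) (Y : Set W') : Closed N (polL N Y) :=
  Set.Subset.antisymm (fun _ hx z hz => hx z fun _ hy => hy z hz)
    fun _ hx _ hz => hz _ hx

theorem gam_closed (N : W → W' → Prop) (X : Set W) : Closed N (gam N X) :=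
  polL_closed N _

theorem gam_subset_s6 {N : W → W' → Prop} {X : Set W} {c : W'} (h : ∀ x ∈ X, N x c) :
    gam N X ⊆ polL N {c} := by
  rintro x hx z rfl
  exact hx z h

/-- Membership in a closed set is tested by the elements of its right polar. -/
theorem mem_of_closed {N : W → W' → Prop} {X : Set W} (hX : Closed N X) {x : W}
    (h : ∀ z ∈ polR N X, N x z) : x ∈ X := by
  rw [← hX]
  exact h

theorem closed_of_subset {N : W → W' → Prop} {X : Set W} (h : gam N X ⊆ X) : Closed N X :=
  Set.Subset.antisymm h fun _ hx _ hz => hz _ hx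

theorem inter_closed {N : W → W' → Prop} {X Y : Set W} (hX : Closed N X) (hY : Closed N Y) :
    Closed N (X ∩ Y) :=
  closed_of_subset fun _ hw =>
    ⟨mem_of_closed hX fun z hz => hw z fun x hx => hz x hx.1,
      mem_of_closed hY fun z hz => hw z fun x hx => hz x hx.2⟩

theorem sld_closed {N : W → W' → Prop} {lres : W → W' → W'} {rres : W' → W → W'}
    (hN : IsResFrame N lres rres) (X : Set W) {Y : Set W} (hY : Closed N Y) :
    Closed N (sld X Y) :=
  closed_of_subset fun w hw x hx => mem_of_closed hY fun z hz =>
    (hN.nuclear_l x w z).2 (hw _ fun v hv => (hN.nuclear_l x v z).1 (hz _ (hv x hx)))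

theorem srd_closed {N : W → W' → Prop} {lres : W → W' → W'} {rres : W' → W → W'}
    (hN : IsResFrame N lres rres) (X : Set W) {Y : Set W} (hY : Closed N Y) :
    Closed N (srd Y X) :=
  closed_of_subset fun w hw x hx => mem_of_closed hY fun z hz =>
    (hN.nuclear_r w x z).2 (hw _ fun v hv => (hN.nuclear_r v x z).1 (hz _ (hv x hx)))

/-- for a cut-free `*`-Gentzen frame `(W, A)`, the map
`F : A → ℘(W⁺)`, `F(a) = {X ∈ W⁺ | a ∈ X ⊆ a^◁}`, is a quasimorphism from
`A` to the dual algebra `W⁺`: `γ({ε}) ∈ F(1)`, `0^◁ ∈ F(0)`,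
`F(a)^{*γ} ⊆ F(a*)`, and `F(a) • F(b) ⊆ F(a • b)` for each binary operation
`• ∈ {∧, ∨, ·, \, /}` (computed elementwise with the dual-algebra
operations `∩`, `∪_γ`, `∘_γ`, `\`, `/`). -/
theorem statement6 (N : W → W' → Prop)
    (lres : W → W' → W') (rres : W' → W → W')
    (ops : AOps A) (i : A → W) (i' : A → W')
    (hG : IsStarGentzenCF N lres rres ops i i') :
    cone N ∈ Fq N i i' ops.one ∧
    polL N {i' ops.zero} ∈ Fq N i i' ops.zero ∧
    (∀ (a : A) (X : Set W), X ∈ Fq N i i' a →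
      cstar N X ∈ Fq N i i' (ops.star a)) ∧
    (∀ (a b : A) (X Y : Set W), X ∈ Fq N i i' a → Y ∈ Fq N i i' b →
      X ∩ Y ∈ Fq N i i' (ops.meet a b) ∧
      cjoin N X Y ∈ Fq N i i' (ops.join a b) ∧
      cmul N X Y ∈ Fq N i i' (ops.mul a b) ∧
      sld X Y ∈ Fq N i i' (ops.ld a b) ∧
      srd X Y ∈ Fq N i i' (ops.rd a b)) := by
  have hN := hG.toIsResFrame
  refine ⟨⟨gam_closed N _, fun z hz => hG.one_L z (hz 1 rfl), gam_subset_s6 ?_⟩,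
    ⟨polL_closed N _, ?_, subset_rfl⟩, ?_, ?_⟩
  · rintro x rfl
    exact hG.one_R
  · rintro z rfl
    exact hG.id_rule _
  · rintro a X ⟨-, haX, hXa⟩
    refine ⟨gam_closed N _, fun z hz => hG.star_L z a fun n =>
      hz _ (pow_mem (Submonoid.subset_closure haX) n), gam_subset_s6 fun x hx => ?_⟩
    induction hx using Submonoid.closure_induction_left with
    | one => exact hG.star_R₀ a
    | mul_left x hx y _ ih => exact hG.star_R₁ x y a (hXa hx _ rfl) ih
  · rintro a b X Y ⟨hX, haX, hXa⟩ ⟨hY, hbY, hYb⟩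
    refine ⟨⟨inter_closed hX hY, ⟨?_, ?_⟩, ?_⟩, ⟨gam_closed N _, ?_, gam_subset_s6 ?_⟩,
      ⟨gam_closed N _, ?_, gam_subset_s6 ?_⟩, ⟨sld_closed hN X hY, ?_, ?_⟩,
      ⟨srd_closed hN Y hX, ?_, ?_⟩⟩
    · exact mem_of_closed hX fun z hz => hG.meet_L₀ z a b (hz _ haX)
    · exact mem_of_closed hY fun z hz => hG.meet_L₁ z a b (hz _ hbY)
    · rintro x ⟨hx, hy⟩ z rfl
      exact hG.meet_R x a b (hXa hx _ rfl) (hYb hy _ rfl)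
    · exact fun z hz => hG.join_L z a b (hz _ (Or.inl haX)) (hz _ (Or.inr hbY))
    · rintro x (hx | hx)
      · exact hG.join_R₀ x a b (hXa hx _ rfl)
      · exact hG.join_R₁ x a b (hYb hx _ rfl)
    · exact fun z hz => hG.mul_L z a b (hz _ (Set.mem_image2_of_mem haX hbY))
    · rintro _ ⟨x, hx, y, hy, rfl⟩
      exact hG.mul_R x y a b (hXa hx _ rfl) (hYb hy _ rfl)
    · exact fun x hx => mem_of_closed hY fun z hz =>
        (hN.nuclear_l x _ z).2 (hG.ld_L x z a b (hXa hx _ rfl) (hz _ hbY))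
    · rintro w hw z rfl
      exact hG.ld_R w a b ((hN.nuclear_l _ w _).1 (hYb (hw _ haX) _ rfl))
    · exact fun y hy => mem_of_closed hX fun z hz =>
        (hN.nuclear_r _ y z).2 (hG.rd_L y z b a (hYb hy _ rfl) (hz _ haX))
    · rintro w hw z rfl
      exact hG.rd_R w b a ((hN.nuclear_r w _ _).1 (hXa (hw _ hbY) _ rfl))

end ResFrames
end

section
/- Cut elimination for ALC^ω + 𝓡: let 𝓡 be a set of analytic structural rules and let Cut be the rule: from Δ ⇒ α and Γ, α, Π ⇒ β infer Γ, Δ, Π ⇒ β. If a sequent S is provable in ALC^ω + 𝓡 + Cut, then S is provable in ALC^ω + 𝓡 (without Cut). -/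
/-!
Cut elimination is proved semantically, in the style of Okada and of residuated frames.

Write `D Γ β` for cut-free derivability. Sets of sequences of formulas (`Language Fm`) carry a closure
operator `cl`: a sequence `x` belongs to `cl X` when every context `Γ, _, Δ ⇒ β` that is cut-free
derivable with each element of `X` plugged in is cut-free derivable with `x` plugged in. The closed
sets form a residuated lattice with a Kleene star, and each formula `α` is interpreted by a closed set
`ev R α`, a variable `a` being sent to `{Γ | D Γ a}`.

Two facts give the theorem. Soundness (`sound`): if `Γ ⇒ β` is derivable *with* cut, then every
concatenation of elements of the interpretations of the formulas of `Γ` lies in `ev R β`; cut is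
just transitivity of inclusion, and an analytic rule is sound because its metavariables occur
exactly once, in order, in the conclusion, so that it may be applied to the chosen elements
themselves. The quasi-embedding (`okada`): `[α] ∈ ev R α ⊆ {Γ | D Γ α}`, by induction on `α`,
using one cut-free left rule and the cut-free right rules for the main connective. Applying
soundness to the sequence `Γ` itself, built from the singletons `[α] ∈ ev R α`, yields
`Γ ∈ ev R β ⊆ {Γ | D Γ β}`. No ordinal analysis of the ω-rule is needed.
-/

/-! Cut elimination for ALC^ω + 𝓡. -/

/-- Formulas over the language `{∧, ∨, ·, \, /, *, 0, 1}` with countably many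
variables. `ld α β` is `α \ β`, `rd α β` is `α / β`. -/
inductive Fm : Type
  | var : ℕ → Fm
  | zero : Fm
  | one : Fm
  | meet : Fm → Fm → Fm
  | join : Fm → Fm → Fm
  | mul : Fm → Fm → Fm
  | ld : Fm → Fm → Fm
  | rd : Fm → Fm → Fm
  | star : Fm → Fm

/-- An analytic structural rule: a number `m` of sequence metavariables
`Σ₀, …, Σ_{m-1}` and a list of premises, each premise being a list over
`Fin m` (encoding the sequence `Σ_{p(0)}, …, Σ_{p(k-1)}`). An instance of
the rule infers `Γ, Σ₀, …, Σ_{m-1}, Δ ⇒ β` from the premises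
`Γ, Σ_{p(0)}, …, Σ_{p(k-1)}, Δ ⇒ β`. -/
structure AnRule : Type where
  m : ℕ
  prems : List (List (Fin m))

/-- Derivability in the wellfounded, possibly infinitely branching sequent
calculus `ALC^ω + 𝓡` (for `cutFlag = false`), resp. `ALC^ω + 𝓡 + Cut` (for
`cutFlag = true`): identity axiom for variables, all instances of the
analytic structural rules in `R`, the axioms 0L, 1R, *R₀, the left/right
rules for `∧, ∨, ·, \, /, 1` of the Full Lambek calculus, the rule *R₁, and
the ω-rule *L_ω. -/
inductive Deriv (R : Set AnRule) : Bool → List Fm → Fm → Prop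
  | id (c : Bool) (n : ℕ) : Deriv R c [.var n] (.var n)
  | rule (c : Bool) (r : AnRule) (hr : r ∈ R) (Γ Δ : List Fm) (β : Fm)
      (Ss : Fin r.m → List Fm)
      (h : ∀ p ∈ r.prems, Deriv R c (Γ ++ (p.map Ss).flatten ++ Δ) β) :
      Deriv R c (Γ ++ ((List.finRange r.m).map Ss).flatten ++ Δ) β
  | zeroL (c : Bool) (Γ Δ : List Fm) (β : Fm) : Deriv R c (Γ ++ .zero :: Δ) β
  | oneR (c : Bool) : Deriv R c [] .one
  | starR0 (c : Bool) (β : Fm) : Deriv R c [] (.star β)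
  | oneL (c : Bool) (Γ Δ : List Fm) (β : Fm)
      (h : Deriv R c (Γ ++ Δ) β) : Deriv R c (Γ ++ .one :: Δ) β
  | meetL0 (c : Bool) (Γ Δ : List Fm) (α₀ α₁ β : Fm)
      (h : Deriv R c (Γ ++ α₀ :: Δ) β) : Deriv R c (Γ ++ .meet α₀ α₁ :: Δ) β
  | meetL1 (c : Bool) (Γ Δ : List Fm) (α₀ α₁ β : Fm)
      (h : Deriv R c (Γ ++ α₁ :: Δ) β) : Deriv R c (Γ ++ .meet α₀ α₁ :: Δ) β
  | meetR (c : Bool) (Γ : List Fm) (β₀ β₁ : Fm)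
      (h₀ : Deriv R c Γ β₀) (h₁ : Deriv R c Γ β₁) : Deriv R c Γ (.meet β₀ β₁)
  | joinL (c : Bool) (Γ Δ : List Fm) (α₀ α₁ β : Fm)
      (h₀ : Deriv R c (Γ ++ α₀ :: Δ) β) (h₁ : Deriv R c (Γ ++ α₁ :: Δ) β) :
      Deriv R c (Γ ++ .join α₀ α₁ :: Δ) β
  | joinR0 (c : Bool) (Γ : List Fm) (β₀ β₁ : Fm)
      (h : Deriv R c Γ β₀) : Deriv R c Γ (.join β₀ β₁)
  | joinR1 (c : Bool) (Γ : List Fm) (β₀ β₁ : Fm)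
      (h : Deriv R c Γ β₁) : Deriv R c Γ (.join β₀ β₁)
  | mulL (c : Bool) (Γ Δ : List Fm) (α₀ α₁ β : Fm)
      (h : Deriv R c (Γ ++ α₀ :: α₁ :: Δ) β) :
      Deriv R c (Γ ++ .mul α₀ α₁ :: Δ) β
  | mulR (c : Bool) (Γ Δ : List Fm) (β₀ β₁ : Fm)
      (h₀ : Deriv R c Γ β₀) (h₁ : Deriv R c Δ β₁) :
      Deriv R c (Γ ++ Δ) (.mul β₀ β₁)
  | ldL (c : Bool) (Γ Δ Sg : List Fm) (α₀ α₁ β : Fm)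
      (h₀ : Deriv R c Δ α₀) (h₁ : Deriv R c (Γ ++ α₁ :: Sg) β) :
      Deriv R c (Γ ++ Δ ++ .ld α₀ α₁ :: Sg) β
  | ldR (c : Bool) (Γ : List Fm) (β₀ β₁ : Fm)
      (h : Deriv R c (β₀ :: Γ) β₁) : Deriv R c Γ (.ld β₀ β₁)
  | rdL (c : Bool) (Γ Δ Sg : List Fm) (α₀ α₁ β : Fm)
      (h₀ : Deriv R c Δ α₀) (h₁ : Deriv R c (Γ ++ α₁ :: Sg) β) :
      Deriv R c (Γ ++ .rd α₁ α₀ :: (Δ ++ Sg)) β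
  | rdR (c : Bool) (Γ : List Fm) (β₀ β₁ : Fm)
      (h : Deriv R c (Γ ++ [β₀]) β₁) : Deriv R c Γ (.rd β₁ β₀)
  | starR1 (c : Bool) (Γ Δ : List Fm) (β : Fm)
      (h₀ : Deriv R c Γ β) (h₁ : Deriv R c Δ (.star β)) :
      Deriv R c (Γ ++ Δ) (.star β)
  | starLom (c : Bool) (Γ Δ : List Fm) (α β : Fm)
      (h : ∀ n : ℕ, Deriv R c (Γ ++ List.replicate n α ++ Δ) β) :
      Deriv R c (Γ ++ .star α :: Δ) β
  | cut (Γ Δ Pi : List Fm) (α β : Fm)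
      (h₀ : Deriv R true Δ α) (h₁ : Deriv R true (Γ ++ α :: Pi) β) :
      Deriv R true (Γ ++ Δ ++ Pi) β

open scoped Computability

/-- The closure of a set `X` of sequences: all `x` that satisfy every cut-free derivable context
satisfied by the whole of `X`. -/
def cl (R : Set AnRule) (X : Language Fm) : Language Fm :=
  {x | ∀ Γ Δ β, (∀ y ∈ X, Deriv R false (Γ ++ y ++ Δ) β) → Deriv R false (Γ ++ x ++ Δ) β}

/-- `X` is a fixed point of `cl R`; only the nontrivial inclusion is recorded. -/
def IsCl (R : Set AnRule) (X : Language Fm) : Prop := ∀ x ∈ cl R X, x ∈ X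

/-- The interpretation of formulas as closed sets of sequences. -/
def ev (R : Set AnRule) : Fm → Language Fm
  | .var n => {x | Deriv R false x (.var n)}
  | .zero => cl R 0
  | .one => cl R 1
  | .meet α β => {x | x ∈ ev R α ∧ x ∈ ev R β}
  | .join α β => cl R (ev R α + ev R β)
  | .mul α β => cl R (ev R α * ev R β)
  | .ld α β => {y | ∀ x ∈ ev R α, x ++ y ∈ ev R β}
  | .rd β α => {y | ∀ x ∈ ev R α, y ++ x ∈ ev R β}
  | .star α => cl R ((ev R α)∗)

/-- The interpretation of a sequence of formulas: all concatenations of elements of the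
interpretations of its members. -/
def evs (R : Set AnRule) (Γ : List Fm) : Language Fm := (Γ.map (ev R)).prod

section
variable {R : Set AnRule}

theorem subset_cl {X : Language Fm} {x : List Fm} (h : x ∈ X) : x ∈ cl R X :=
  fun _ _ _ H => H x h

/-- Closed sets are stable under residuation by arbitrary sequences on both sides: an inclusion
`u X v ⊆ B` into a closed set extends to `u (cl X) v ⊆ B`. -/
theorem cl_ctx {X B : Language Fm} (hB : IsCl R B) {u v : List Fm}
    (h : ∀ w ∈ X, u ++ w ++ v ∈ B) {w : List Fm} (hw : w ∈ cl R X) : u ++ w ++ v ∈ B := by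
  apply hB
  intro Γ Δ β H
  have := hw (Γ ++ u) (v ++ Δ) β (fun y hy => by simpa using H _ (h y hy))
  simpa using this

theorem isCl_cl (X : Language Fm) : IsCl R (cl R X) :=
  fun _ hx Γ Δ β H => hx Γ Δ β (fun _ hy => hy Γ Δ β H)

theorem cl_le {X B : Language Fm} (hB : IsCl R B) (h : ∀ w ∈ X, w ∈ B) {w : List Fm}
    (hw : w ∈ cl R X) : w ∈ B := by
  simpa using cl_ctx (u := []) (v := []) hB (by simpa using h) hw

theorem isCl_deriv (α : Fm) : IsCl R ({x | Deriv R false x α} : Set (List Fm)) := by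
  intro x hx
  change Deriv R false x α
  have := hx [] [] α (fun y hy => by
    change Deriv R false y α at hy
    simpa using hy)
  simpa using this

theorem isCl_ev (α : Fm) : IsCl R (ev R α) := by
  induction α with
  | var n => exact isCl_deriv _
  | zero | one | join | mul | star => exact isCl_cl _
  | meet α β iha ihb =>
    exact fun x hx => ⟨cl_le iha (fun _ h => h.1) hx, cl_le ihb (fun _ h => h.2) hx⟩
  | ld α β iha ihb =>
    intro y hy x hx
    simpa using cl_ctx (u := x) (v := []) ihb (fun w hw => by simpa using hw x hx) hy
  | rd β α ihb iha =>
    intro y hy x hx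
    simpa using cl_ctx (u := []) (v := x) ihb (fun w hw => by simpa using hw x hx) hy

theorem mem_evs_append {Γ Δ x : List Fm} :
    x ∈ evs R (Γ ++ Δ) ↔ ∃ u ∈ evs R Γ, ∃ v ∈ evs R Δ, u ++ v = x := by
  simp [evs, Language.mem_mul]

theorem mem_evs_cons {α : Fm} {Δ x : List Fm} :
    x ∈ evs R (α :: Δ) ↔ ∃ u ∈ ev R α, ∃ v ∈ evs R Δ, u ++ v = x := by
  simp [evs, Language.mem_mul]

theorem mem_evs_nil {x : List Fm} : x ∈ evs R [] ↔ x = [] := by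
  simp [evs, Language.mem_one]

theorem evs_append {Γ Δ u v : List Fm} (hu : u ∈ evs R Γ) (hv : v ∈ evs R Δ) :
    u ++ v ∈ evs R (Γ ++ Δ) := mem_evs_append.2 ⟨u, hu, v, hv, rfl⟩

theorem evs_cons {α : Fm} {Δ u v : List Fm} (hu : u ∈ ev R α) (hv : v ∈ evs R Δ) :
    u ++ v ∈ evs R (α :: Δ) := mem_evs_cons.2 ⟨u, hu, v, hv, rfl⟩

theorem evs_mid {α : Fm} {Γ Δ u w v : List Fm} (hu : u ∈ evs R Γ) (hw : w ∈ ev R α)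
    (hv : v ∈ evs R Δ) : u ++ w ++ v ∈ evs R (Γ ++ α :: Δ) := by
  rw [List.append_assoc]
  exact evs_append hu (evs_cons hw hv)

theorem evs_mid_elim {α : Fm} {Γ Δ x : List Fm} (h : x ∈ evs R (Γ ++ α :: Δ)) :
    ∃ u ∈ evs R Γ, ∃ w ∈ ev R α, ∃ v ∈ evs R Δ, x = u ++ w ++ v := by
  obtain ⟨u, hu, y, hy, rfl⟩ := mem_evs_append.1 h
  obtain ⟨w, hw, v, hv, rfl⟩ := mem_evs_cons.1 hy
  exact ⟨u, hu, w, hw, v, hv, by simp⟩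

theorem evs_flatten {ι : Type} {S f : ι → List Fm} (hf : ∀ i, f i ∈ evs R (S i)) (p : List ι) :
    (p.map f).flatten ∈ evs R (p.map S).flatten := by
  induction p with
  | nil => simp [mem_evs_nil]
  | cons i p ih => simpa using evs_append (hf i) ih

/-- An element interpreting a concatenation over a repetition-free list of indices splits into one
component per index. This is where linearity of the conclusion of an analytic rule is used. -/
theorem evs_split {ι : Type} [DecidableEq ι] {S : ι → List Fm} (L : List ι) (hL : L.Nodup)
    {w : List Fm} (hw : w ∈ evs R (L.map S).flatten) :
    ∃ f : ι → List Fm, (∀ i ∈ L, f i ∈ evs R (S i)) ∧ (L.map f).flatten = w := by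
  induction L generalizing w with
  | nil =>
    refine ⟨fun _ => [], by simp, ?_⟩
    simpa [mem_evs_nil, eq_comm] using hw
  | cons i L ih =>
    rw [List.nodup_cons] at hL
    rw [List.map_cons, List.flatten_cons] at hw
    obtain ⟨u, hu, v, hv, rfl⟩ := mem_evs_append.1 hw
    obtain ⟨f, hf, rfl⟩ := ih hL.2 hv
    have hne : ∀ j ∈ L, Function.update f i u j = f j := by
      intro j hj
      refine Function.update_of_ne ?_ _ _
      rintro rfl
      exact hL.1 hj
    refine ⟨Function.update f i u, ?_, ?_⟩
    · intro j hj
      rcases List.mem_cons.1 hj with rfl | hj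
      · simpa using hu
      · rw [hne j hj]
        exact hf j hj
    · rw [List.map_cons, List.flatten_cons, List.map_congr_left hne]
      simp

theorem evs_replicate {α : Fm} (L : List (List Fm)) (h : ∀ y ∈ L, y ∈ ev R α) :
    L.flatten ∈ evs R (List.replicate L.length α) := by
  induction L with
  | nil => simp [mem_evs_nil]
  | cons y L ih =>
    simp only [List.forall_mem_cons] at h
    simpa [List.replicate_succ] using evs_cons h.1 (ih h.2)

/-- Soundness of the calculus with cut for the interpretation by closed sets. -/
theorem sound {c : Bool} {Γ : List Fm} {β : Fm} (h : Deriv R c Γ β) :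
    ∀ x ∈ evs R Γ, x ∈ ev R β := by
  induction h with
  | id c n =>
    intro x hx
    obtain ⟨u, hu, v, hv, rfl⟩ := mem_evs_cons.1 hx
    rw [mem_evs_nil] at hv
    simpa [hv] using hu
  | rule c r hr Γ Δ β Ss h ih =>
    intro x hx
    obtain ⟨y, hy, v, hv, rfl⟩ := mem_evs_append.1 hx
    obtain ⟨u, hu, w, hw, rfl⟩ := mem_evs_append.1 hy
    obtain ⟨f, hf, rfl⟩ := evs_split _ (List.nodup_finRange _) hw
    have hf' : ∀ i, f i ∈ evs R (Ss i) := fun i => hf i (List.mem_finRange i)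
    apply isCl_ev β
    intro Γ' Δ' δ H
    -- The rule itself is applied, cut-free, with `f` in place of `Ss`.
    have := Deriv.rule false r hr (Γ' ++ u) (v ++ Δ') δ f (fun p hp => by
      simpa using H _ (ih p hp _ (evs_append (evs_append hu (evs_flatten hf' p)) hv)))
    simpa using this
  | zeroL c Γ Δ β =>
    intro x hx
    obtain ⟨u, hu, w, hw, v, hv, rfl⟩ := evs_mid_elim hx
    exact cl_ctx (isCl_ev β) (fun w hw => absurd hw (Language.notMem_zero w)) hw
  | oneR c =>
    intro x hx
    rw [mem_evs_nil] at hx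
    exact subset_cl ((Language.mem_one _).2 hx)
  | starR0 c β =>
    intro x hx
    rw [mem_evs_nil] at hx
    subst hx
    exact subset_cl (Language.nil_mem_kstar _)
  | oneL c Γ Δ β h ih =>
    intro x hx
    obtain ⟨u, hu, w, hw, v, hv, rfl⟩ := evs_mid_elim hx
    refine cl_ctx (isCl_ev β) (fun w hw => ?_) hw
    rw [(Language.mem_one _).1 hw]
    simpa using ih _ (evs_append hu hv)
  | meetL0 c Γ Δ α₀ α₁ β h ih =>
    intro x hx
    obtain ⟨u, hu, w, hw, v, hv, rfl⟩ := evs_mid_elim hx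
    exact ih _ (evs_mid hu hw.1 hv)
  | meetL1 c Γ Δ α₀ α₁ β h ih =>
    intro x hx
    obtain ⟨u, hu, w, hw, v, hv, rfl⟩ := evs_mid_elim hx
    exact ih _ (evs_mid hu hw.2 hv)
  | meetR c Γ β₀ β₁ h₀ h₁ ih₀ ih₁ => exact fun x hx => ⟨ih₀ x hx, ih₁ x hx⟩
  | joinL c Γ Δ α₀ α₁ β h₀ h₁ ih₀ ih₁ =>
    intro x hx
    obtain ⟨u, hu, w, hw, v, hv, rfl⟩ := evs_mid_elim hx
    refine cl_ctx (isCl_ev β) (fun w hw => ?_) hw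
    rcases (Language.mem_add _ _ _).1 hw with hw | hw
    · exact ih₀ _ (evs_mid hu hw hv)
    · exact ih₁ _ (evs_mid hu hw hv)
  | joinR0 c Γ β₀ β₁ h ih =>
    exact fun x hx => subset_cl ((Language.mem_add _ _ _).2 (Or.inl (ih x hx)))
  | joinR1 c Γ β₀ β₁ h ih =>
    exact fun x hx => subset_cl ((Language.mem_add _ _ _).2 (Or.inr (ih x hx)))
  | mulL c Γ Δ α₀ α₁ β h ih =>
    intro x hx
    obtain ⟨u, hu, w, hw, v, hv, rfl⟩ := evs_mid_elim hx
    refine cl_ctx (isCl_ev β) (fun w hw => ?_) hw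
    obtain ⟨a, ha, b, hb, rfl⟩ := Language.mem_mul.1 hw
    simpa using ih _ (evs_append hu (evs_cons ha (evs_cons hb hv)))
  | mulR c Γ Δ β₀ β₁ h₀ h₁ ih₀ ih₁ =>
    intro x hx
    obtain ⟨u, hu, v, hv, rfl⟩ := mem_evs_append.1 hx
    exact subset_cl (Language.mem_mul.2 ⟨u, ih₀ _ hu, v, ih₁ _ hv, rfl⟩)
  | ldL c Γ Δ Sg α₀ α₁ β h₀ h₁ ih₀ ih₁ =>
    intro x hx
    obtain ⟨y, hy, w, hw, v, hv, rfl⟩ := evs_mid_elim hx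
    obtain ⟨u, hu, d, hd, rfl⟩ := mem_evs_append.1 hy
    simpa using ih₁ _ (evs_mid hu (hw d (ih₀ d hd)) hv)
  | ldR c Γ β₀ β₁ h ih => exact fun x hx y hy => ih _ (evs_cons hy hx)
  | rdL c Γ Δ Sg α₀ α₁ β h₀ h₁ ih₀ ih₁ =>
    intro x hx
    obtain ⟨u, hu, w, hw, y, hy, rfl⟩ := evs_mid_elim hx
    obtain ⟨d, hd, v, hv, rfl⟩ := mem_evs_append.1 hy
    simpa using ih₁ _ (evs_mid hu (hw d (ih₀ d hd)) hv)
  | rdR c Γ β₀ β₁ h ih =>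
    intro x hx y hy
    simpa using ih _ (evs_mid hx hy (mem_evs_nil.2 rfl))
  | starR1 c Γ Δ β h₀ h₁ ih₀ ih₁ =>
    intro x hx
    obtain ⟨u, hu, v, hv, rfl⟩ := mem_evs_append.1 hx
    have := cl_ctx (u := u) (v := []) (isCl_ev (.star β)) (fun w hw => ?_) (ih₁ v hv)
    · simpa using this
    · obtain ⟨L, rfl, hL⟩ := Language.mem_kstar.1 hw
      refine subset_cl (Language.mem_kstar.2 ⟨u :: L, by simp, ?_⟩)
      simpa using ⟨ih₀ u hu, hL⟩
  | starLom c Γ Δ α β h ih =>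
    intro x hx
    obtain ⟨u, hu, w, hw, v, hv, rfl⟩ := evs_mid_elim hx
    refine cl_ctx (isCl_ev β) (fun w hw => ?_) hw
    obtain ⟨L, rfl, hL⟩ := Language.mem_kstar.1 hw
    exact ih L.length _ (evs_append (evs_append hu (evs_replicate L hL)) hv)
  | cut Γ Δ Pi α β h₀ h₁ ih₀ ih₁ =>
    intro x hx
    obtain ⟨y, hy, v, hv, rfl⟩ := mem_evs_append.1 hx
    obtain ⟨u, hu, d, hd, rfl⟩ := mem_evs_append.1 hy
    exact ih₁ _ (evs_mid hu (ih₀ d hd) hv)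

/-- The quasi-embedding of formulas into the algebra of closed sets: `[α] ∈ ev R α`, and every
element of `ev R α` derives `α` without cut. -/
theorem okada (α : Fm) : [α] ∈ ev R α ∧ ∀ x ∈ ev R α, Deriv R false x α := by
  induction α with
  | var n => exact ⟨Deriv.id _ n, fun x hx => hx⟩
  | zero =>
    refine ⟨fun Γ Δ β _ => by simpa using Deriv.zeroL false Γ Δ β, fun x hx => ?_⟩
    exact cl_le (isCl_deriv .zero) (fun w hw => absurd hw (Language.notMem_zero w)) hx
  | one =>
    refine ⟨fun Γ Δ β H => ?_, fun x hx => ?_⟩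
    · simpa using Deriv.oneL false Γ Δ β (by simpa using H [] Language.nil_mem_one)
    · refine cl_le (isCl_deriv .one) (fun w hw => ?_) hx
      rw [(Language.mem_one _).1 hw]
      exact Deriv.oneR _
  | meet α β iha ihb =>
    refine ⟨⟨?_, ?_⟩, fun x hx => Deriv.meetR _ _ _ _ (iha.2 x hx.1) (ihb.2 x hx.2)⟩
    · exact isCl_ev α _ fun Γ Δ δ H => by
        simpa using Deriv.meetL0 false Γ Δ α β δ (by simpa using H _ iha.1)
    · exact isCl_ev β _ fun Γ Δ δ H => by
        simpa using Deriv.meetL1 false Γ Δ α β δ (by simpa using H _ ihb.1)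
  | join α β iha ihb =>
    refine ⟨fun Γ Δ δ H => ?_, fun x hx => ?_⟩
    · have h₀ := H _ ((Language.mem_add _ _ _).2 (Or.inl iha.1))
      have h₁ := H _ ((Language.mem_add _ _ _).2 (Or.inr ihb.1))
      simpa using Deriv.joinL false Γ Δ α β δ (by simpa using h₀) (by simpa using h₁)
    · refine cl_le (isCl_deriv _) (fun w hw => ?_) hx
      rcases (Language.mem_add _ _ _).1 hw with hw | hw
      · exact Deriv.joinR0 _ _ _ _ (iha.2 w hw)
      · exact Deriv.joinR1 _ _ _ _ (ihb.2 w hw)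
  | mul α β iha ihb =>
    refine ⟨fun Γ Δ δ H => ?_, fun x hx => ?_⟩
    · have h := H _ (Language.mem_mul.2 ⟨_, iha.1, _, ihb.1, rfl⟩)
      simpa using Deriv.mulL false Γ Δ α β δ (by simpa using h)
    · refine cl_le (isCl_deriv _) (fun w hw => ?_) hx
      obtain ⟨a, ha, b, hb, rfl⟩ := Language.mem_mul.1 hw
      exact Deriv.mulR _ _ _ _ _ (iha.2 a ha) (ihb.2 b hb)
  | ld α β iha ihb =>
    refine ⟨fun x hx => ?_, fun y hy => Deriv.ldR _ _ _ _ (ihb.2 _ (hy _ iha.1))⟩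
    exact isCl_ev β _ fun Γ Δ δ H => by
      simpa using Deriv.ldL false Γ x Δ α β δ (iha.2 x hx) (by simpa using H _ ihb.1)
  | rd β α ihb iha =>
    refine ⟨fun x hx => ?_, fun y hy => Deriv.rdR _ _ _ _ (ihb.2 _ (hy _ iha.1))⟩
    exact isCl_ev β _ fun Γ Δ δ H => by
      simpa using Deriv.rdL false Γ x Δ α β δ (iha.2 x hx) (by simpa using H _ ihb.1)
  | star α ih =>
    refine ⟨fun Γ Δ δ H => ?_, fun x hx => ?_⟩
    · have h : ∀ n : ℕ, Deriv R false (Γ ++ List.replicate n α ++ Δ) δ := fun n => by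
        refine H _ (Language.mem_kstar.2 ⟨List.replicate n [α], by simp, ?_⟩)
        intro y hy
        rw [List.eq_of_mem_replicate hy]
        exact ih.1
      simpa using Deriv.starLom false Γ Δ α δ h
    · refine cl_le (isCl_deriv _) (fun w hw => ?_) hx
      obtain ⟨L, rfl, hL⟩ := Language.mem_kstar.1 hw
      change Deriv R false L.flatten (.star α)
      clear hw
      induction L with
      | nil => exact Deriv.starR0 _ _
      | cons y L ihL =>
        simp only [List.forall_mem_cons] at hL
        exact Deriv.starR1 _ _ _ _ (ih.2 y hL.1) (ihL hL.2)

theorem self_mem_evs (Γ : List Fm) : Γ ∈ evs R Γ := by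
  induction Γ with
  | nil => exact mem_evs_nil.2 rfl
  | cons α Γ ih => exact evs_cons (okada α).1 ih

end

/-- cut elimination for `ALC^ω + 𝓡`, `𝓡` a set of analytic
structural rules: every sequent provable in `ALC^ω + 𝓡 + Cut` (flag `true`)
is provable in `ALC^ω + 𝓡` without Cut (flag `false`). -/
theorem statement19 (R : Set AnRule) (Γ : List Fm) (β : Fm)
    (h : Deriv R true Γ β) : Deriv R false Γ β :=
  (okada β).2 Γ (sound h Γ (self_mem_evs Γ))
end
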